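/- Let I = I_1 ∪ ⋯ ∪ I_r be a finite union of nonempty bounded closed integer intervals with sup I_i < inf I_{i+1} for all i, and define Ω_I : ℤ → [1, 2r+1] by Ω_I(n) = 2i if n ∈ I_i, Ω_I(n) = 1 if n < inf I_1, and Ω_I(n) = max{1 + 2i : sup I_i < n} otherwise. Then for every sequence (c_k)_{k∈ℕ} of integers, the minimal value of Ω_I(c_k) that is attained for infinitely many k is even if and only if liminf_{k→∞} c_k is finite and belongs to I. -/

import Mathlib

/-!
`Ω_I` is monotone and takes an even value exactly on `I`, where the value `2(i+1)` determines
the interval. For a sequence `c`, `liminf c = m` with `m` an integer means that eventually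
`m ≤ c k` and that `c k ≤ m` infinitely often (`liminf_eq_intCast_iff`).

If `liminf c = m ∈ I`, then `Ω_I m` is attained infinitely often and, by monotonicity, is
eventually a lower bound of `Ω_I (c k)`. Conversely, if the minimal recurring value is
`2(i+1)`, then eventually `c k ≥ lo i` while `c k ≤ hi i` infinitely often; the largest
integer that is an eventual lower bound of `c` therefore lies in `I_{i+1}` and is the liminf.
-/

open Filter

open scoped Classical in
/-- The priority function `Ω_I` associated with the union of the integer intervals
`[lo i, hi i]` (the `i`-th interval being `I_{i+1}` in 1-based numbering):
`Ω_I(n) = 2(i+1)` if `n ∈ I_{i+1}`, `Ω_I(n) = 1` if `n` is below all intervals, and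
otherwise the maximum of `2(i+1)+1` over intervals `I_{i+1}` lying strictly below `n`. -/
noncomputable def OmegaI (r : ℕ) (lo hi : Fin r → ℤ) (n : ℤ) : ℕ :=
  if h : ∃ i : Fin r, lo i ≤ n ∧ n ≤ hi i then 2 * (h.choose.1 + 1)
  else if hS : (Finset.univ.filter (fun i : Fin r => hi i < n)).Nonempty then
    2 * ((Finset.univ.filter (fun i : Fin r => hi i < n)).max' hS).1 + 3
  else 1

lemma OmegaI_of_mem {r : ℕ} {lo hi : Fin r → ℤ}
    (hord : ∀ i j : Fin r, i < j → hi i < lo j) {n : ℤ} {i : Fin r}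
    (h1 : lo i ≤ n) (h2 : n ≤ hi i) : OmegaI r lo hi n = 2 * (i.1 + 1) := by
  have h : ∃ i : Fin r, lo i ≤ n ∧ n ≤ hi i := ⟨i, h1, h2⟩
  unfold OmegaI
  rw [dif_pos h]
  have hc := h.choose_spec
  have : h.choose = i := by
    rcases lt_trichotomy h.choose i with hl | he | hl
    · have := hord _ _ hl
      omega
    · exact he
    · have := hord _ _ hl
      omega
  rw [this]

/-- Outside `I` the value is either `1`, with no interval below `n`, or `2i+3` for the largest
`i` whose interval lies below `n`. -/
lemma OmegaI_of_notMem {r : ℕ} {lo hi : Fin r → ℤ} {n : ℤ}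
    (h : ¬ ∃ i : Fin r, lo i ≤ n ∧ n ≤ hi i) :
    (OmegaI r lo hi n = 1 ∧ ∀ i, n ≤ hi i) ∨
      ∃ i, OmegaI r lo hi n = 2 * i.1 + 3 ∧ hi i < n ∧ ∀ j, hi j < n → j ≤ i := by
  classical
  unfold OmegaI
  rw [dif_neg h]
  split_ifs with hS
  · right
    refine ⟨_, rfl, ?_, ?_⟩
    · exact (Finset.mem_filter.1 (Finset.max'_mem _ hS)).2
    · intro j hj
      exact Finset.le_max' (Finset.univ.filter fun i => hi i < n) j
        (Finset.mem_filter.2 ⟨Finset.mem_univ _, hj⟩)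
  · left
    refine ⟨rfl, fun i => ?_⟩
    by_contra hi'
    exact hS ⟨i, Finset.mem_filter.2 ⟨Finset.mem_univ _, not_le.1 hi'⟩⟩

lemma exists_mem_of_even_OmegaI {r : ℕ} {lo hi : Fin r → ℤ} {n : ℤ}
    (h : Even (OmegaI r lo hi n)) : ∃ i : Fin r, lo i ≤ n ∧ n ≤ hi i := by
  by_contra hn
  obtain ⟨a, ha⟩ := h
  rcases OmegaI_of_notMem hn with ⟨h1, -⟩ | ⟨i, h1, -⟩ <;> omega

lemma OmegaI_mono {r : ℕ} {lo hi : Fin r → ℤ} (hne : ∀ i, lo i ≤ hi i)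
    (hord : ∀ i j : Fin r, i < j → hi i < lo j) : Monotone (OmegaI r lo hi) := by
  intro n m hnm
  by_cases hn : ∃ i : Fin r, lo i ≤ n ∧ n ≤ hi i
  · obtain ⟨i, hi1, hi2⟩ := hn
    rw [OmegaI_of_mem hord hi1 hi2]
    by_cases hm : ∃ i : Fin r, lo i ≤ m ∧ m ≤ hi i
    · obtain ⟨j, hj1, hj2⟩ := hm
      rw [OmegaI_of_mem hord hj1 hj2]
      have : i ≤ j := by
        by_contra hl
        have := hord _ _ (not_le.1 hl)
        omega
      have : i.1 ≤ j.1 := this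
      omega
    · have him : hi i < m := by
        by_contra hl
        exact hm ⟨i, by omega, by omega⟩
      rcases OmegaI_of_notMem hm with ⟨-, h2⟩ | ⟨j, h1, -, h3⟩
      · have := h2 i
        omega
      · have : i.1 ≤ j.1 := h3 i him
        omega
  · rcases OmegaI_of_notMem hn with ⟨h1, -⟩ | ⟨i, h1, h2, -⟩
    · rw [h1]
      by_cases hm : ∃ i : Fin r, lo i ≤ m ∧ m ≤ hi i
      · obtain ⟨j, hj1, hj2⟩ := hm
        rw [OmegaI_of_mem hord hj1 hj2]
        omega
      · rcases OmegaI_of_notMem hm with ⟨h, -⟩ | ⟨j, h, -⟩ <;> omega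
    · rw [h1]
      by_cases hm : ∃ i : Fin r, lo i ≤ m ∧ m ≤ hi i
      · obtain ⟨j, hj1, hj2⟩ := hm
        rw [OmegaI_of_mem hord hj1 hj2]
        have : i < j := by
          by_contra hl
          rcases (not_lt.1 hl).lt_or_eq with hl | rfl
          · have := hord _ _ hl
            have := hne i
            omega
          · omega
        have : i.1 < j.1 := this
        omega
      · rcases OmegaI_of_notMem hm with ⟨-, h⟩ | ⟨j, h, -, h3⟩
        · have := h i
          omega
        · have : i.1 ≤ j.1 := h3 i (by omega)
          omega

lemma liminf_eq_intCast_iff (c : ℕ → ℤ) (m : ℤ) :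
    liminf (fun k => ((c k : ℝ) : EReal)) atTop = ((m : ℝ) : EReal) ↔
      (∀ᶠ k in atTop, m ≤ c k) ∧ ∃ᶠ k in atTop, c k ≤ m := by
  constructor
  · intro h
    constructor
    · have hlt : (((m : ℝ) - 1 : ℝ) : EReal) <
          liminf (fun k => ((c k : ℝ) : EReal)) atTop := by
        rw [h, EReal.coe_lt_coe_iff]
        linarith
      filter_upwards [eventually_lt_of_lt_liminf hlt] with k hk
      rw [EReal.coe_lt_coe_iff] at hk
      have : m - 1 < c k := by exact_mod_cast hk
      omega
    · have hlt : liminf (fun k => ((c k : ℝ) : EReal)) atTop <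
          (((m : ℝ) + 1 : ℝ) : EReal) := by
        rw [h, EReal.coe_lt_coe_iff]
        linarith
      refine (frequently_lt_of_liminf_lt (by isBoundedDefault) hlt).mono fun k hk => ?_
      rw [EReal.coe_lt_coe_iff] at hk
      have : c k < m + 1 := by exact_mod_cast hk
      omega
  · rintro ⟨h1, h2⟩
    apply le_antisymm
    · refine liminf_le_of_frequently_le (h2.mono fun k hk => ?_) (by isBoundedDefault)
      rw [EReal.coe_le_coe_iff]
      exact_mod_cast hk
    · refine le_liminf_of_le (by isBoundedDefault) (h1.mono fun k hk => ?_)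
      rw [EReal.coe_le_coe_iff]
      exact_mod_cast hk

/-- For `I = I_1 ∪ ⋯ ∪ I_r` a finite union of nonempty bounded
closed integer intervals with `sup I_i < inf I_{i+1}`, and for every integer sequence
`c`, the minimal value of `Ω_I (c k)` attained for infinitely many `k` is even iff the
liminf of `c` (in the extended reals) is finite and belongs to `I`. -/
theorem stmt3 (r : ℕ) (hr : 0 < r) (lo hi : Fin r → ℤ)
    (hne : ∀ i, lo i ≤ hi i) (hord : ∀ i j : Fin r, i < j → hi i < lo j)
    (I : Set ℤ) (hI : I = ⋃ i : Fin r, Set.Icc (lo i) (hi i))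
    (c : ℕ → ℤ) :
    (∃ p, Even p ∧ (∀ N, ∃ k, N ≤ k ∧ OmegaI r lo hi (c k) = p) ∧
        ∀ q, (∀ N, ∃ k, N ≤ k ∧ OmegaI r lo hi (c k) = q) → p ≤ q) ↔
      (∃ m : ℤ, m ∈ I ∧
        liminf (fun k => ((c k : ℝ) : EReal)) atTop = ((m : ℝ) : EReal)) := by
  have hmono := OmegaI_mono hne hord
  simp only [liminf_eq_intCast_iff]
  constructor
  · rintro ⟨p, hp, hinf, hmin⟩
    obtain ⟨k₀, -, hk₀⟩ := hinf 0
    obtain ⟨i, hi1, hi2⟩ := exists_mem_of_even_OmegaI (hk₀ ▸ hp)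
    have hpi : p = 2 * (i.1 + 1) := hk₀ ▸ OmegaI_of_mem hord hi1 hi2
    have hge : ∀ᶠ k in atTop, p ≤ OmegaI r lo hi (c k) := by
      have hall : ∀ᶠ k in atTop, ∀ q ∈ Finset.range p, OmegaI r lo hi (c k) ≠ q := by
        rw [Filter.eventually_all_finset]
        intro q hq
        by_contra hcon
        have := hmin q (fun N => by
          obtain ⟨k, hk, hk'⟩ := (not_eventually.1 hcon).forall_exists_of_atTop N
          exact ⟨k, hk, not_not.1 hk'⟩)
        have := Finset.mem_range.1 hq
        omega
      filter_upwards [hall] with k hk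
      by_contra hlt
      exact hk _ (Finset.mem_range.2 (not_le.1 hlt)) rfl
    have hlo : ∀ᶠ k in atTop, lo i ≤ c k := by
      filter_upwards [hge] with k hk
      by_contra hlt
      -- below `lo i`, monotonicity would force the even value `p` at a point outside `I_{i+1}`
      have hle := hmono (not_le.1 hlt).le
      rw [OmegaI_of_mem hord le_rfl (hne i), ← hpi] at hle
      have heq : OmegaI r lo hi (c k) = p := le_antisymm hle hk
      obtain ⟨j, hj1, hj2⟩ := exists_mem_of_even_OmegaI (heq ▸ hp)
      have hj := OmegaI_of_mem hord hj1 hj2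
      have hij : j = i := Fin.ext (by omega)
      subst hij
      exact hlt hj1
    have hhi : ∃ᶠ k in atTop, c k ≤ hi i := by
      rw [frequently_atTop]
      intro N
      obtain ⟨k, hk, hkp⟩ := hinf N
      obtain ⟨j, hj1, hj2⟩ := exists_mem_of_even_OmegaI (hkp ▸ hp)
      have hj := OmegaI_of_mem hord hj1 hj2
      have hij : j = i := Fin.ext (by omega)
      subst hij
      exact ⟨k, hk, hj2⟩
    have hbdd : ∀ z : ℤ, (∀ᶠ k in atTop, z ≤ c k) → z ≤ hi i := by
      intro z hz
      obtain ⟨k, hk1, hk2⟩ := (hhi.and_eventually hz).exists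
      omega
    obtain ⟨m, hm, hmax⟩ := Int.exists_greatest_of_bdd ⟨_, hbdd⟩ ⟨_, hlo⟩
    refine ⟨m, ?_, hm, ?_⟩
    · rw [hI]
      exact Set.mem_iUnion.2 ⟨i, hmax _ hlo, hbdd _ hm⟩
    · intro hcon
      have := hmax (m + 1) (hcon.mono fun k hk => by omega)
      omega
  · rintro ⟨m, hmI, hev, hfr⟩
    rw [hI] at hmI
    obtain ⟨i, hi1, hi2⟩ := Set.mem_iUnion.1 hmI
    refine ⟨OmegaI r lo hi m, ?_, ?_, ?_⟩
    · rw [OmegaI_of_mem hord hi1 hi2]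
      exact even_two_mul _
    · intro N
      obtain ⟨k, hk, hk1, hk2⟩ := frequently_atTop.1 (hfr.and_eventually hev) N
      exact ⟨k, hk, by rw [le_antisymm hk1 hk2]⟩
    · intro q hq
      obtain ⟨N, hN⟩ := eventually_atTop.1 hev
      obtain ⟨k, hk, rfl⟩ := hq N
      exact hmono (hN k hk)
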